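/- Let J : (0, r] → ℝ be a nonnegative function satisfying, for all r₁ with r₁ ≤ t ≤ (4/3)r₁ ≤ r: |√(r₁/t)·J(r₁) − J(t)| ≤ C'. Then for all 0 < r₁ ≤ r: J(r₁) ≥ √(r/r₁) · (J(r) − C'') where C'' = C'·√(4/3)/(√(4/3) − 1) + C'. -/

import Mathlib

/-!
With `ρ = 4 / 3`, the comparison hypothesis says that `F t = √t • J t` varies by at most `C * √t`
between `x` and `t` whenever `x ≤ t ≤ ρ * x ≤ r`. Descending from `r` through the radii
`r / ρ ^ k`, these variations form a geometric series of ratio `1 / √ρ`, which contributes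
`C * √ρ / (√ρ - 1)`. Once `r / ρ ^ k` has passed below `r₁`, a single comparison of that radius
with `r₁` contributes the last `C`.
-/

section WeightedVariation

variable {α : Type*} [PseudoMetricSpace α]

theorem dist_zero_le_of_dist_succ_le_geometric {u : ℕ → α} {A q : ℝ} (hq₀ : 0 ≤ q) (hq₁ : q < 1)
    (hu : ∀ k, dist (u k) (u (k + 1)) ≤ A * q ^ k) (n : ℕ) : dist (u 0) (u n) ≤ A / (1 - q) := by
  have hA : 0 ≤ A := by simpa using dist_nonneg.trans (hu 0)
  calc dist (u 0) (u n) ≤ ∑ k ∈ Finset.range n, A * q ^ k :=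
        dist_le_range_sum_of_dist_le n fun _ ↦ hu _
    _ = A * ∑ k ∈ Finset.range n, q ^ k := (Finset.mul_sum ..).symm
    _ ≤ A * (1 - q)⁻¹ := by
        gcongr
        rw [← tsum_geometric_of_lt_one hq₀ hq₁]
        exact (summable_geometric_of_lt_one hq₀ hq₁).sum_le_tsum _ fun k _ ↦ pow_nonneg hq₀ k
    _ = A / (1 - q) := (div_eq_mul_inv _ _).symm

theorem dist_div_pow_le_of_dist_le_mul_sqrt {F : ℝ → α} {r C ρ : ℝ} (hρ : 1 < ρ)
    (hF : ∀ k : ℕ, dist (F (r / ρ ^ (k + 1))) (F (r / ρ ^ k)) ≤ C * √(r / ρ ^ k)) (n : ℕ) :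
    dist (F (r / ρ ^ n)) (F r) ≤ C * √ρ / (√ρ - 1) * √r := by
  have hρ₀ : 0 ≤ ρ := zero_le_one.trans hρ.le
  have one_lt_sqrt : 1 < √ρ := Real.lt_sqrt_of_sq_lt (by rwa [one_pow])
  have sqrt_pow (k : ℕ) : √(ρ ^ k) = √ρ ^ k := by
    rw [Real.sqrt_eq_iff_eq_sq (pow_nonneg hρ₀ k) (by positivity), pow_right_comm,
      Real.sq_sqrt hρ₀]
  have sqrt_radius (k : ℕ) : √(r / ρ ^ k) = √r * (√ρ)⁻¹ ^ k := by
    rw [Real.sqrt_div' r (pow_nonneg hρ₀ k), sqrt_pow, inv_pow, div_eq_mul_inv]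
  have hsum := dist_zero_le_of_dist_succ_le_geometric (u := fun k ↦ F (r / ρ ^ k)) (A := C * √r)
    (inv_nonneg.2 (Real.sqrt_nonneg ρ)) (inv_lt_one_of_one_lt₀ one_lt_sqrt)
    (fun k ↦ by simpa only [dist_comm, sqrt_radius, mul_assoc] using hF k) n
  have sum_eq : C * √r / (1 - (√ρ)⁻¹) = C * √ρ / (√ρ - 1) * √r := by
    have : √ρ - 1 ≠ 0 := (sub_pos.2 one_lt_sqrt).ne'
    field_simp
  simpa only [pow_zero, div_one, dist_comm, sum_eq] using hsum

theorem exists_div_pow_succ_le_and_le_div_pow {x r ρ : ℝ} (hρ : 1 < ρ) (hx : 0 < x) (hxr : x ≤ r) :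
    ∃ n : ℕ, r / ρ ^ (n + 1) ≤ x ∧ x ≤ r / ρ ^ n := by
  have hρ₀ : 0 < ρ := zero_lt_one.trans hρ
  obtain ⟨n, hn, hn'⟩ := exists_nat_pow_near ((one_le_div hx).2 hxr) hρ
  exact ⟨n, (div_le_comm₀ hx (pow_pos hρ₀ _)).1 hn'.le, (le_div_comm₀ (pow_pos hρ₀ _) hx).1 hn⟩

theorem dist_le_of_dist_le_mul_sqrt {F : ℝ → α} {r C ρ : ℝ} (hρ : 1 < ρ)
    (hF : ∀ x t, 0 < x → x ≤ t → t ≤ ρ * x → ρ * x ≤ r → dist (F x) (F t) ≤ C * √t)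
    {x : ℝ} (hx : 0 < x) (hxr : x ≤ r) :
    dist (F x) (F r) ≤ (C * √ρ / (√ρ - 1) + C) * √r := by
  have hρ₀ : 0 < ρ := zero_lt_one.trans hρ
  have hr : 0 < r := hx.trans_le hxr
  have radius_pos (k : ℕ) : 0 < r / ρ ^ k := div_pos hr (pow_pos hρ₀ k)
  have radius_le (k : ℕ) : r / ρ ^ k ≤ r := div_le_self hr.le (one_le_pow₀ hρ.le)
  have mul_radius_succ (k : ℕ) : ρ * (r / ρ ^ (k + 1)) = r / ρ ^ k := by
    rw [pow_succ', ← mul_div_assoc, mul_div_mul_left _ _ hρ₀.ne']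
  have dist_radius_le (k : ℕ) {t : ℝ} (hkt : r / ρ ^ (k + 1) ≤ t) (htk : t ≤ r / ρ ^ k) :
      dist (F (r / ρ ^ (k + 1))) (F t) ≤ C * √t :=
    hF _ t (radius_pos _) hkt (htk.trans_eq (mul_radius_succ k).symm)
      ((mul_radius_succ k).trans_le (radius_le k))
  obtain ⟨n, hnx, hxn⟩ := exists_div_pow_succ_le_and_le_div_pow hρ hx hxr
  have hC : 0 ≤ C :=
    nonneg_of_mul_nonneg_left (dist_nonneg.trans (dist_radius_le n hnx hxn)) (Real.sqrt_pos.2 hx)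
  calc dist (F x) (F r)
      ≤ dist (F (r / ρ ^ (n + 1))) (F x) + dist (F (r / ρ ^ (n + 1))) (F r) :=
        dist_triangle_left _ _ _
    _ ≤ C * √r + C * √ρ / (√ρ - 1) * √r := by
        gcongr
        · exact (dist_radius_le n hnx hxn).trans (by gcongr)
        · refine dist_div_pow_le_of_dist_le_mul_sqrt hρ (fun k ↦ dist_radius_le k ?_ le_rfl) _
          exact div_le_div_of_nonneg_left hr.le (pow_pos hρ₀ k) (pow_le_pow_right₀ hρ.le k.le_succ)
    _ = (C * √ρ / (√ρ - 1) + C) * √r := by ring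

end WeightedVariation

section NormalizedComparison

variable {E : Type*} [SeminormedAddCommGroup E] [NormedSpace ℝ E]

theorem norm_sqrt_div_smul_sub_le_iff {x t K : ℝ} (ht : 0 < t) (u v : E) :
    ‖√(x / t) • u - v‖ ≤ K ↔ dist (√x • u) (√t • v) ≤ K * √t := by
  have hst : 0 < √t := Real.sqrt_pos.2 ht
  have factor : √x • u - √t • v = √t • (√(x / t) • u - v) := by
    rw [smul_sub, smul_smul, Real.sqrt_div' x ht.le, mul_div_cancel₀ _ hst.ne']
  rw [dist_eq_norm, factor, norm_smul, Real.norm_of_nonneg hst.le, mul_comm,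
    mul_le_mul_iff_left₀ hst]

theorem stmt_8_general {J : ℝ → E} {r C ρ : ℝ} (hρ : 1 < ρ)
    (hstep : ∀ x t, 0 < x → x ≤ t → t ≤ ρ * x → ρ * x ≤ r → ‖√(x / t) • J x - J t‖ ≤ C)
    {x : ℝ} (hx : 0 < x) (hxr : x ≤ r) :
    ‖√(x / r) • J x - J r‖ ≤ C * √ρ / (√ρ - 1) + C :=
  (norm_sqrt_div_smul_sub_le_iff (hx.trans_le hxr) _ _).2 <|
    dist_le_of_dist_le_mul_sqrt (F := fun t ↦ √t • J t) hρ
      (fun y t hy hyt hty hyr ↦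
        (norm_sqrt_div_smul_sub_le_iff (hy.trans_le hyt) _ _).1 (hstep y t hy hyt hty hyr))
      hx hxr

end NormalizedComparison

theorem sqrt_div_mul_sub_le_of_abs_le {x t a b K : ℝ} (hx : 0 < x) (ht : 0 < t)
    (h : |√(x / t) * a - b| ≤ K) : √(t / x) * (b - K) ≤ a := by
  have hxt : 0 < √(x / t) := Real.sqrt_pos.2 (div_pos hx ht)
  rw [← inv_div, Real.sqrt_inv, inv_mul_le_iff₀ hxt]
  linarith [(abs_le.1 h).1]

/-- Decay of the normalized jump (abstract form of Lemma `lemme7`): if the nonnegative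
function `J` satisfies the one-step comparison
`|√(r₁/t) J(r₁) − J(t)| ≤ C'` whenever `r₁ ≤ t ≤ (4/3) r₁ ≤ r`, then for all `0 < r₁ ≤ r`,
`J(r₁) ≥ √(r/r₁) (J(r) − C'')` where `C'' = C' √(4/3)/(√(4/3) − 1) + C'`. -/
theorem stmt_8 (J : ℝ → ℝ) (r C' : ℝ) (hr : 0 < r) (hC' : 0 ≤ C')
    (hnonneg : ∀ t, 0 < t → t ≤ r → 0 ≤ J t)
    (hstep : ∀ r₁ t, 0 < r₁ → r₁ ≤ t → t ≤ (4 / 3) * r₁ → (4 / 3) * r₁ ≤ r →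
      |Real.sqrt (r₁ / t) * J r₁ - J t| ≤ C') :
    ∀ r₁, 0 < r₁ → r₁ ≤ r →
      Real.sqrt (r / r₁) *
        (J r - (C' * Real.sqrt (4 / 3) / (Real.sqrt (4 / 3) - 1) + C')) ≤ J r₁ := by
  intro r₁ h₁ h₁r
  exact sqrt_div_mul_sub_le_of_abs_le h₁ hr
    (stmt_8_general (J := J) (ρ := 4 / 3) (by norm_num) hstep h₁ h₁r)
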